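/- Let n ≥ 2, let a₁,...,aₙ be positive integers, and let b be a nonnegative integer. For an integer d, let P*(d) denote the number of tuples (t₁,...,tₙ) with each tᵢ ∈ {0,1} and ∑_{i=1}^n aᵢtᵢ = d. Set s₁ = ⌊(∑_{i=1}^n aᵢ)/2⌋ and s₂ = ⌊(∑_{i=1}^n aᵢ − 1)/2⌋. Then: if b is even, P(b) = ∑_{k=0}^{s₁} P*(2k) · P(b/2 − k); and if b is odd, P(b) = ∑_{k=0}^{s₂} P*(2k+1) · P(⌊b/2⌋ − k). -/

import Mathlib

/-!
Every tuple `x` of nonnegative integers is uniquely `x = 2y + t` with `y` a tuple of nonnegative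
integers and `t` a tuple of bits, namely `y = ⌊x / 2⌋` and `t = x mod 2` entrywise. If
`∑ aᵢxᵢ = 2m + r` with `r ∈ {0, 1}`, then `∑ aᵢtᵢ` has the parity of `r`, say `∑ aᵢtᵢ = 2k + r`, and
then `∑ aᵢyᵢ = m - k`. Since `∑ aᵢtᵢ ≤ ∑ aᵢ`, only finitely many `k` occur, and counting the pairs
`(t, y)` for each `k` gives both formulas at once (`card_solutions_eq_sum`).
-/

/-- Positivity of the coefficients bounds every entry of a solution by the right-hand side. -/
lemma finite_solutions {n : ℕ} (a : Fin n → ℕ) (ha : ∀ i, 0 < a i) (c : ℤ) :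
    Finite {x : Fin n → ℕ // ∑ i, (a i : ℤ) * x i = c} := by
  refine ((Set.finite_Iic (fun _ : Fin n => c.toNat)).subset ?_).to_subtype
  intro x hx i
  have hx' : ∑ i, (a i : ℤ) * x i = c := hx
  have h1 : (a i : ℤ) * x i ≤ ∑ i, (a i : ℤ) * x i :=
    Finset.single_le_sum (f := fun i => (a i : ℤ) * x i) (fun j _ => by positivity)
      (Finset.mem_univ i)
  have h2 : (x i : ℤ) ≤ (a i : ℤ) * x i := by
    exact_mod_cast Nat.le_mul_of_pos_left (x i) (ha i)
  change x i ≤ c.toNat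
  omega

lemma finite_bit_solutions {n : ℕ} (a : Fin n → ℕ) (d : ℕ) :
    Finite {t : Fin n → ℕ // (∀ i, t i ≤ 1) ∧ ∑ i, a i * t i = d} :=
  ((Set.finite_Iic (fun _ : Fin n => 1)).subset fun _ ht => ht.1).to_subtype

/-- The two parity cases together: the solutions `x` for right-hand side `2m + r` correspond to
triples `(k, t, y)` through `x = 2y + t`. The hypothesis on `S` says that the range of summation
contains every `k` for which `2k + r` can be a sum of distinct coefficients. -/
lemma card_solutions_eq_sum {n : ℕ} (a : Fin n → ℕ) (ha : ∀ i, 0 < a i) (m r S : ℕ)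
    (hr : r < 2) (hS : ∀ k, 2 * k + r ≤ ∑ i, a i → k ≤ S) :
    Nat.card {x : Fin n → ℕ // ∑ i, (a i : ℤ) * x i = 2 * m + r} =
      ∑ k ∈ Finset.range (S + 1),
        Nat.card {t : Fin n → ℕ // (∀ i, t i ≤ 1) ∧ ∑ i, a i * t i = 2 * k + r} *
          Nat.card {y : Fin n → ℕ // ∑ i, (a i : ℤ) * y i = (m : ℤ) - k} := by
  have hf1 := fun d => finite_bit_solutions a d
  have hf2 := fun c => finite_solutions a ha c
  rw [Finset.sum_range]
  simp only [← Nat.card_prod]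
  rw [← Nat.card_sigma]
  symm
  refine Nat.card_eq_of_bijective
    (fun p : (Σ k : Fin (S + 1),
        {t : Fin n → ℕ // (∀ i, t i ≤ 1) ∧ ∑ i, a i * t i = 2 * (k : ℕ) + r} ×
          {y : Fin n → ℕ // ∑ i, (a i : ℤ) * y i = (m : ℤ) - (k : ℕ)}) =>
      (⟨fun i => 2 * p.2.2.1 i + p.2.1.1 i, ?_⟩ :
        {x : Fin n → ℕ // ∑ i, (a i : ℤ) * x i = 2 * m + r})) ⟨?_, ?_⟩
  · obtain ⟨k, ⟨t, ht, hts⟩, ⟨y, hy⟩⟩ := p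
    have hts' : ∑ i, (a i : ℤ) * t i = 2 * (k : ℕ) + r := by exact_mod_cast hts
    have : ∀ i, (a i : ℤ) * ((2 * y i + t i : ℕ) : ℤ) = 2 * (a i * y i) + a i * t i := by
      intro i; push_cast; ring
    simp only [this, Finset.sum_add_distrib, ← Finset.mul_sum, hy, hts']
    ring
  · rintro ⟨k, ⟨t, ht, hts⟩, ⟨y, hy⟩⟩ ⟨k', ⟨t', ht', hts'⟩, ⟨y', hy'⟩⟩ h
    have h0 : ∀ i, 2 * y i + t i = 2 * y' i + t' i := fun i => congrFun (congrArg Subtype.val h) i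
    obtain rfl : t = t' := by
      funext i; have := h0 i; have := ht i; have := ht' i; omega
    obtain rfl : y = y' := by
      funext i; have := h0 i; omega
    obtain rfl : k = k' := by
      apply Fin.ext; omega
    rfl
  · rintro ⟨x, hx⟩
    have hsplit : ∑ i, (a i : ℤ) * x i =
        2 * ∑ i, (a i : ℤ) * ((x i / 2 : ℕ) : ℤ) + ((∑ i, a i * (x i % 2) : ℕ) : ℤ) := by
      rw [Nat.cast_sum, Finset.mul_sum, ← Finset.sum_add_distrib]
      refine Finset.sum_congr rfl fun i _ => ?_
      have h : (x i : ℤ) = 2 * ((x i / 2 : ℕ) : ℤ) + ((x i % 2 : ℕ) : ℤ) := by omega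
      rw [Nat.cast_mul]
      linear_combination (a i : ℤ) * h
    have hle : ∑ i, a i * (x i % 2) ≤ ∑ i, a i :=
      Finset.sum_le_sum fun i _ => mul_le_of_le_one_right (Nat.zero_le _) (by omega)
    obtain ⟨k, hk⟩ : ∃ k, ∑ i, a i * (x i % 2) = 2 * k + r :=
      ⟨(∑ i, a i * (x i % 2)) / 2, by omega⟩
    have hkS := hS k (by omega)
    refine ⟨⟨⟨k, by omega⟩, ⟨fun i => x i % 2, fun i => Nat.lt_succ_iff.1 (Nat.mod_lt _ two_pos), hk⟩,
      ⟨fun i => x i / 2, ?_⟩⟩, ?_⟩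
    · change ∑ i, (a i : ℤ) * ((x i / 2 : ℕ) : ℤ) = (m : ℤ) - (k : ℕ)
      omega
    · apply Subtype.ext
      funext i
      exact Nat.div_add_mod (x i) 2


/-- Corollary 4.4: let `P*(d)` count tuples `(t₁,…,tₙ)` with each
`tᵢ ∈ {0,1}` and `∑ aᵢtᵢ = d`, and set `s₁ = ⌊(∑aᵢ)/2⌋`, `s₂ = ⌊(∑aᵢ − 1)/2⌋`. Then:
if `b` is even, `P(b) = ∑_{k=0}^{s₁} P*(2k) P(b/2 − k)`; if `b` is odd,
`P(b) = ∑_{k=0}^{s₂} P*(2k+1) P(⌊b/2⌋ − k)`. -/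
theorem stmt_18 (n : ℕ) (hn : 2 ≤ n) (a : Fin n → ℕ)
    (ha : ∀ i, 0 < a i) (b : ℕ)
    (P : ℤ → ℕ)
    (hP : ∀ c : ℤ, P c = Nat.card {x : Fin n → ℕ // ∑ i, (a i : ℤ) * x i = c})
    (Pstar : ℕ → ℕ)
    (hPstar : ∀ d : ℕ, Pstar d =
      Nat.card {t : Fin n → ℕ // (∀ i, t i ≤ 1) ∧ ∑ i, a i * t i = d})
    (s₁ s₂ : ℕ)
    (hs₁ : s₁ = (∑ i, a i) / 2) (hs₂ : s₂ = ((∑ i, a i) - 1) / 2) :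
    (Even b →
      P (b : ℤ) = ∑ k ∈ Finset.range (s₁ + 1),
        Pstar (2 * k) * P (((b / 2 : ℕ) : ℤ) - k)) ∧
    (Odd b →
      P (b : ℤ) = ∑ k ∈ Finset.range (s₂ + 1),
        Pstar (2 * k + 1) * P (((b / 2 : ℕ) : ℤ) - k)) := by
  have hpos : 0 < ∑ i, a i :=
    Finset.sum_pos (fun i _ => ha i) ⟨⟨0, by omega⟩, Finset.mem_univ _⟩
  simp only [hP, hPstar]
  constructor
  · rintro ⟨m, rfl⟩
    have h := card_solutions_eq_sum a ha m 0 s₁ (by omega) (fun k hk => by omega)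
    have e1 : (m + m) / 2 = m := by omega
    have e2 : ((m + m : ℕ) : ℤ) = 2 * m + (0 : ℕ) := by push_cast; ring
    rw [e1, e2]
    exact h
  · rintro ⟨m, rfl⟩
    have h := card_solutions_eq_sum a ha m 1 s₂ (by omega) (fun k hk => by omega)
    have e1 : (2 * m + 1) / 2 = m := by omega
    have e2 : ((2 * m + 1 : ℕ) : ℤ) = 2 * m + (1 : ℕ) := by push_cast; ring
    rw [e1, e2]
    exact h
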